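/- arXiv:1202.4591 — 6 statements merged into one kernel-verified Lean document; each statement's English description precedes it below -/
import Mathlib

section
/- Let (Ω,Σ,P) be a probability space and I an additive partition entropy. If 𝒜 and ℬ are finite measurable partitions and Z∈Σ satisfies P(Z)=0 and 𝒜|(Ω∖Z) = ℬ|(Ω∖Z), then I(𝒜)=I(ℬ). -/
/-!
A partition `𝒟` all of whose atoms have measure `0` or `1` is independent of every partition, so
`I (𝒜 ∨ 𝒟) = I 𝒜 + I 𝒟` for every `𝒜`. Take `𝒟` to consist of `Zᶜ`, which has full measure, and of
the nonempty traces `A ∩ B ∩ Z`, which are null. Then `𝒜 ∨ 𝒟` is made of `𝒜|Zᶜ` together with these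
traces (`join_insert`), and `ℬ ∨ 𝒟` of `ℬ|Zᶜ` together with the same traces. Since
`𝒜|Zᶜ = ℬ|Zᶜ`, the two joins coincide, and cancelling `I 𝒟` gives `I 𝒜 = I ℬ`.
-/

open MeasureTheory Filter Topology

namespace APE

variable {Ω : Type*} [MeasurableSpace Ω]

/-- A finite measurable partition of `Ω`: a finite collection of nonempty pairwise
disjoint measurable sets whose union is `Ω`. -/
def IsFinPart (𝒜 : Finset (Set Ω)) : Prop :=
  (∀ A ∈ 𝒜, MeasurableSet A) ∧ (∀ A ∈ 𝒜, A ≠ ∅) ∧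
    (𝒜 : Set (Set Ω)).PairwiseDisjoint id ∧ ⋃₀ (𝒜 : Set (Set Ω)) = Set.univ

/-- The join (common refinement) `𝒜 ∨ ℬ` of two finite partitions. -/
noncomputable def join (𝒜 ℬ : Finset (Set Ω)) : Finset (Set Ω) := by
  classical
  exact ((𝒜 ×ˢ ℬ).image fun p => p.1 ∩ p.2).filter fun s => s ≠ ∅

/-- Stochastic independence `𝒜 ⊥ ℬ` of two finite partitions. -/
def Indep (P : Measure Ω) (𝒜 ℬ : Finset (Set Ω)) : Prop :=
  ∀ A ∈ 𝒜, ∀ B ∈ ℬ, P (A ∩ B) = P A * P B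

/-- An additive partition entropy: `I (𝒜·ℬ) = I 𝒜 + I ℬ` for independent partitions. -/
def IsAPE (P : Measure Ω) (I : Finset (Set Ω) → ℝ) : Prop :=
  ∀ 𝒜 ℬ : Finset (Set Ω), IsFinPart 𝒜 → IsFinPart ℬ → Indep P 𝒜 ℬ →
    I (join 𝒜 ℬ) = I 𝒜 + I ℬ

/-- Restriction `𝒜|S` of a partition to a set `S`. -/
noncomputable def restr (𝒜 : Finset (Set Ω)) (S : Set Ω) : Finset (Set Ω) := by
  classical
  exact (𝒜.image fun A => A ∩ S).filter fun s => s ≠ ∅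

/-- The number `N(𝒜)` of atoms of positive measure. -/
noncomputable def numPos (P : Measure Ω) (𝒜 : Finset (Set Ω)) : ℕ := by
  classical
  exact (𝒜.filter fun A => 0 < P A).card

/-- The pseudometric `D` on finite partitions. -/
noncomputable def Ddist (P : Measure Ω) (𝒜 ℬ : Finset (Set Ω)) : ℝ :=
  sInf ((fun Z => (P Z).toReal) ''
      {Z : Set Ω | MeasurableSet Z ∧ restr 𝒜 Zᶜ = restr ℬ Zᶜ}) +
    |(numPos P 𝒜 : ℝ) - (numPos P ℬ : ℝ)|

/-- Continuity of `I` with respect to the pseudometric `D`. -/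
def CtsD (P : Measure Ω) (I : Finset (Set Ω) → ℝ) : Prop :=
  ∀ 𝒜 : Finset (Set Ω), IsFinPart 𝒜 → ∀ ε : ℝ, 0 < ε → ∃ δ : ℝ, 0 < δ ∧
    ∀ ℬ : Finset (Set Ω), IsFinPart ℬ → Ddist P 𝒜 ℬ < δ → |I ℬ - I 𝒜| < ε

/-- The two-atom partition `{A, Ω ∖ A}`. -/
noncomputable def twoPart (A : Set Ω) : Finset (Set Ω) := by
  classical
  exact {A, Aᶜ}

/-- Continuity of `I` on the family `𝔄₂` of two-atom partitions. -/
def CtsOnA2 (P : Measure Ω) (I : Finset (Set Ω) → ℝ) : Prop :=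
  ∀ (A : Set Ω) (As : ℕ → Set Ω), MeasurableSet A → (∀ n, MeasurableSet (As n)) →
    0 < P A → P A < 1 →
    Tendsto (fun n => (P (symmDiff A (As n))).toReal) atTop (𝓝 0) →
    Tendsto (fun n => I (twoPart (As n))) atTop (𝓝 (I (twoPart A)))

/-- The Darboux property of a measure. -/
def Darboux (P : Measure Ω) : Prop :=
  ∀ A : Set Ω, MeasurableSet A → ∀ θ : ENNReal, 0 < θ → θ < P A →
    ∃ B : Set Ω, MeasurableSet B ∧ B ⊆ A ∧ P B = θ

/-- Nonatomicity of a measure. -/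
def NonAtomic (P : Measure Ω) : Prop :=
  ∀ A : Set Ω, MeasurableSet A → 0 < P A →
    ∃ B : Set Ω, MeasurableSet B ∧ B ⊆ A ∧ 0 < P B ∧ P B < P A

/-- A finitely additive real set function on measurable sets. -/
def FinAdd (m : Set Ω → ℝ) : Prop :=
  ∀ A B : Set Ω, MeasurableSet A → MeasurableSet B → Disjoint A B →
    m (A ∪ B) = m A + m B

/-- A countably additive real set function on measurable sets. -/
def CountAdd (m : Set Ω → ℝ) : Prop :=
  ∀ f : ℕ → Set Ω, (∀ n, MeasurableSet (f n)) →
    (∀ i j, i ≠ j → Disjoint (f i) (f j)) →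
    HasSum (fun n => m (f n)) (m (⋃ n, f n))

/-- Absolute continuity of `m` with respect to `P`. -/
def AbsCont (P : Measure Ω) (m : Set Ω → ℝ) : Prop :=
  ∀ ε : ℝ, 0 < ε → ∃ δ : ℝ, 0 < δ ∧
    ∀ A : Set Ω, MeasurableSet A → (P A).toReal < δ → |m A| < ε

/-- The entropy `L_m(𝒜) = Σ_{A∈𝒜} m(A)·log₂(1/P(A))`.  (If `P A = 0` then the
corresponding term vanishes: `m A = 0` for `m` vanishing on null sets, which
implements the convention `0·(+∞) = 0`.) -/
noncomputable def Lm (P : Measure Ω) (m : Set Ω → ℝ) (𝒜 : Finset (Set Ω)) : ℝ :=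
  ∑ A ∈ 𝒜, m A * Real.logb 2 (1 / (P A).toReal)

/-- Two partitions have the same measures of atoms. -/
def SameMeasures (P : Measure Ω) (𝒜 ℬ : Finset (Set Ω)) : Prop :=
  ∃ e : {A : Set Ω // A ∈ 𝒜} ≃ {B : Set Ω // B ∈ ℬ}, ∀ A, P (e A).1 = P A.1

/-- `I` depends solely on the measures of atoms. -/
def DependsOnMeasures (P : Measure Ω) (I : Finset (Set Ω) → ℝ) : Prop :=
  ∀ 𝒜 ℬ : Finset (Set Ω), IsFinPart 𝒜 → IsFinPart ℬ → SameMeasures P 𝒜 ℬ → I 𝒜 = I ℬ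

/-- The operation `T_{V,W}`, replacing the atom `A₁ ⊇ V` by `(A₁∖V)∪W` and the atom
`A₂ ⊇ W` by `(A₂∖W)∪V`. -/
noncomputable def swap (V W A₁ A₂ : Set Ω) (𝒜 : Finset (Set Ω)) : Finset (Set Ω) := by
  classical
  exact insert ((A₁ \ V) ∪ W) (insert ((A₂ \ W) ∪ V) ((𝒜.erase A₁).erase A₂))

/-- `ε(λ) = min (1/(1+λ)) (1/(1+λ⁻¹))`. -/
noncomputable def epsFun (lam : ℝ) : ℝ := min (1 / (1 + lam)) (1 / (1 + lam⁻¹))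

/-- An indexed finite measurable partition. -/
def IsPartIdx {n : ℕ} (A : Fin n → Set Ω) : Prop :=
  (∀ i, MeasurableSet (A i)) ∧ (∀ i, A i ≠ ∅) ∧
    (∀ i j, i ≠ j → Disjoint (A i) (A j)) ∧ (⋃ i, A i) = Set.univ

/-- The finset of atoms of an indexed partition. -/
noncomputable def idxFinset {n : ℕ} (A : Fin n → Set Ω) : Finset (Set Ω) := by
  classical
  exact Finset.univ.image A

/-- The two-atom family `{A, B}`. -/
noncomputable def pairPart (A B : Set Ω) : Finset (Set Ω) := by
  classical
  exact {A, B}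

/-- Membership of `𝒜` in `F_λ(V,W)`, with designated distinct atoms `A₁ ⊇ V`,
`A₂ ⊇ W` such that `P(A₂)/P(A₁) = λ`. -/
def memF (P : Measure Ω) (V W : Set Ω) (lam : ℝ) (𝒜 : Finset (Set Ω))
    (A₁ A₂ : Set Ω) : Prop :=
  IsFinPart 𝒜 ∧ A₁ ∈ 𝒜 ∧ A₂ ∈ 𝒜 ∧ A₁ ≠ A₂ ∧ V ⊆ A₁ ∧ W ⊆ A₂ ∧
    (P A₂).toReal / (P A₁).toReal = lam

/-- Measurable sets with rational measure. -/
def InRat (P : Measure Ω) (A : Set Ω) : Prop :=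
  MeasurableSet A ∧ ∃ q : ℚ, (P A).toReal = (q : ℝ)

/-- The characteristic properties of `Δ(V,W,λ)` associated with an additive
partition entropy `I` (Proposition 3 of the paper). -/
def DeltaSpec (P : Measure Ω) (I : Finset (Set Ω) → ℝ)
    (Δ : Set Ω → Set Ω → ℝ → ℝ) : Prop :=
  (∀ V W : Set Ω, ∀ lam : ℝ, MeasurableSet V → MeasurableSet W → P V = P W →
      0 < lam → Disjoint V W →
      ∀ 𝒜 A₁ A₂, memF P V W lam 𝒜 A₁ A₂ →
        Δ V W lam = I (swap V W A₁ A₂ 𝒜) - I 𝒜) ∧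
  (∀ U V W : Set Ω, ∀ lam : ℝ, MeasurableSet U → MeasurableSet V → MeasurableSet W →
      P U = P V → P V = P W → 0 < lam →
      Δ U W lam = Δ U V lam + Δ V W lam) ∧
  (∀ V₁ V₂ W₁ W₂ : Set Ω, ∀ lam : ℝ, MeasurableSet V₁ → MeasurableSet V₂ →
      MeasurableSet W₁ → MeasurableSet W₂ → Disjoint V₁ V₂ → Disjoint W₁ W₂ →
      P V₁ = P W₁ → P V₂ = P W₂ → 0 < lam →
      Δ (V₁ ∪ V₂) (W₁ ∪ W₂) lam = Δ V₁ W₁ lam + Δ V₂ W₂ lam) ∧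
  (∀ V W : Set Ω, ∀ kap lam : ℝ, MeasurableSet V → MeasurableSet W → P V = P W →
      0 < kap → 0 < lam →
      Δ V W (kap * lam) = Δ V W kap + Δ V W lam)

lemma mem_join {𝒜 ℬ : Finset (Set Ω)} {s : Set Ω} :
    s ∈ join 𝒜 ℬ ↔ (∃ A ∈ 𝒜, ∃ B ∈ ℬ, A ∩ B = s) ∧ s ≠ ∅ := by
  simp only [join, Finset.mem_filter, Finset.mem_image, Finset.mem_product, Prod.exists]
  grind

lemma mem_restr {𝒜 : Finset (Set Ω)} {S s : Set Ω} :
    s ∈ restr 𝒜 S ↔ (∃ A ∈ 𝒜, A ∩ S = s) ∧ s ≠ ∅ := by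
  simp only [restr, Finset.mem_filter, Finset.mem_image]

lemma IsFinPart.exists_mem {𝒜 : Finset (Set Ω)} (h : IsFinPart 𝒜) (x : Ω) : ∃ A ∈ 𝒜, x ∈ A := by
  have hx : x ∈ ⋃₀ (𝒜 : Set (Set Ω)) := h.2.2.2 ▸ Set.mem_univ x
  simpa using hx

lemma IsFinPart.eq_of_mem {𝒜 : Finset (Set Ω)} (h : IsFinPart 𝒜) {A B : Set Ω} (hA : A ∈ 𝒜)
    (hB : B ∈ 𝒜) {x : Ω} (hxA : x ∈ A) (hxB : x ∈ B) : A = B := by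
  by_contra hne
  exact Set.disjoint_left.1 (h.2.2.1 hA hB hne) hxA hxB

lemma isFinPart_of {𝒜 : Finset (Set Ω)} (hm : ∀ A ∈ 𝒜, MeasurableSet A) (hne : ∀ A ∈ 𝒜, A ≠ ∅)
    (heq : ∀ A ∈ 𝒜, ∀ B ∈ 𝒜, ∀ x, x ∈ A → x ∈ B → A = B) (hcov : ∀ x, ∃ A ∈ 𝒜, x ∈ A) :
    IsFinPart 𝒜 := by
  refine ⟨hm, hne, fun A hA B hB hAB => ?_, ?_⟩
  · exact Set.disjoint_left.2 fun x hxA hxB => hAB (heq A hA B hB x hxA hxB)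
  · exact Set.eq_univ_of_forall fun x => by simpa using hcov x

lemma IsFinPart.join {𝒜 ℬ : Finset (Set Ω)} (h𝒜 : IsFinPart 𝒜) (hℬ : IsFinPart ℬ) :
    IsFinPart (join 𝒜 ℬ) := by
  refine isFinPart_of ?_ (fun s hs => (mem_join.1 hs).2) ?_ ?_
  · intro s hs
    obtain ⟨⟨A, hA, B, hB, rfl⟩, -⟩ := mem_join.1 hs
    exact (h𝒜.1 A hA).inter (hℬ.1 B hB)
  · intro s hs t ht x hxs hxt
    obtain ⟨⟨A, hA, B, hB, rfl⟩, -⟩ := mem_join.1 hs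
    obtain ⟨⟨A', hA', B', hB', rfl⟩, -⟩ := mem_join.1 ht
    rw [h𝒜.eq_of_mem hA hA' hxs.1 hxt.1, hℬ.eq_of_mem hB hB' hxs.2 hxt.2]
  · intro x
    obtain ⟨A, hA, hxA⟩ := h𝒜.exists_mem x
    obtain ⟨B, hB, hxB⟩ := hℬ.exists_mem x
    exact ⟨A ∩ B, mem_join.2 ⟨⟨A, hA, B, hB, rfl⟩, Set.nonempty_iff_ne_empty.1 ⟨x, hxA, hxB⟩⟩,
      hxA, hxB⟩

open Classical in
/-- Leaving the complement of `Z` whole and cutting `Z` along a partition yields a partition. -/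
lemma isFinPart_insert_compl {𝒞 : Finset (Set Ω)} (h : IsFinPart 𝒞) {Z : Set Ω}
    (hZ : MeasurableSet Z) (hne : Zᶜ ≠ ∅) : IsFinPart (insert Zᶜ (restr 𝒞 Z)) := by
  refine isFinPart_of ?_ ?_ ?_ ?_
  · intro s hs
    rcases Finset.mem_insert.1 hs with rfl | hs
    · exact hZ.compl
    · obtain ⟨⟨C, hC, rfl⟩, -⟩ := mem_restr.1 hs
      exact (h.1 C hC).inter hZ
  · intro s hs
    rcases Finset.mem_insert.1 hs with rfl | hs
    · exact hne
    · exact (mem_restr.1 hs).2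
  · intro s hs t ht x hxs hxt
    rcases Finset.mem_insert.1 hs with rfl | hs <;> rcases Finset.mem_insert.1 ht with rfl | ht
    · rfl
    · obtain ⟨⟨C, hC, rfl⟩, -⟩ := mem_restr.1 ht
      exact absurd hxt.2 hxs
    · obtain ⟨⟨C, hC, rfl⟩, -⟩ := mem_restr.1 hs
      exact absurd hxs.2 hxt
    · obtain ⟨⟨C, hC, rfl⟩, -⟩ := mem_restr.1 hs
      obtain ⟨⟨C', hC', rfl⟩, -⟩ := mem_restr.1 ht
      rw [h.eq_of_mem hC hC' hxs.1 hxt.1]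
  · intro x
    by_cases hx : x ∈ Z
    · obtain ⟨C, hC, hxC⟩ := h.exists_mem x
      exact ⟨C ∩ Z, Finset.mem_insert_of_mem
        (mem_restr.2 ⟨⟨C, hC, rfl⟩, Set.nonempty_iff_ne_empty.1 ⟨x, hxC, hx⟩⟩), hxC, hx⟩
    · exact ⟨Zᶜ, Finset.mem_insert_self _ _, hx⟩

open Classical in
/-- Every set of the right-hand family has measure `0` or `1`, being either `Zᶜ` or a subset of the
null set `Z`; such a family is independent of anything. -/
lemma indep_insert_compl (P : Measure Ω) [IsProbabilityMeasure P] {Z : Set Ω}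
    (hZ : MeasurableSet Z) (hZ0 : P Z = 0) (𝒜 𝒞 : Finset (Set Ω)) :
    Indep P 𝒜 (insert Zᶜ (restr 𝒞 Z)) := by
  intro A _ D hD
  rcases Finset.mem_insert.1 hD with rfl | hD
  · rw [(prob_compl_eq_one_iff hZ).2 hZ0, mul_one]
    exact measure_inter_conull (by simpa using hZ0)
  · obtain ⟨⟨C, -, rfl⟩, -⟩ := mem_restr.1 hD
    rw [measure_mono_null (Set.inter_subset_right.trans Set.inter_subset_right) hZ0,
      measure_mono_null Set.inter_subset_right hZ0, mul_zero]

open Classical in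
/-- Sets contained in atoms of `𝒜` are not cut further when joined with `𝒜`. -/
lemma join_insert {𝒜 : Finset (Set Ω)} (h𝒜 : IsFinPart 𝒜) (W : Set Ω) {ℰ : Finset (Set Ω)}
    (hne : ∀ E ∈ ℰ, E ≠ ∅) (hsub : ∀ E ∈ ℰ, ∃ A ∈ 𝒜, E ⊆ A) :
    join 𝒜 (insert W ℰ) = restr 𝒜 W ∪ ℰ := by
  ext s
  rw [Finset.mem_union, mem_join, mem_restr]
  constructor
  · rintro ⟨⟨A, hA, D, hD, rfl⟩, hs⟩
    rcases Finset.mem_insert.1 hD with rfl | hD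
    · exact Or.inl ⟨⟨A, hA, rfl⟩, hs⟩
    · right
      obtain ⟨A', hA', hDA'⟩ := hsub D hD
      obtain ⟨x, hxA, hxD⟩ := Set.nonempty_iff_ne_empty.2 hs
      obtain rfl := h𝒜.eq_of_mem hA hA' hxA (hDA' hxD)
      rwa [Set.inter_eq_right.2 hDA']
  · rintro (⟨⟨A, hA, rfl⟩, hs⟩ | hs)
    · exact ⟨⟨A, hA, W, Finset.mem_insert_self _ _, rfl⟩, hs⟩
    · obtain ⟨A, hA, hsA⟩ := hsub s hs
      exact ⟨⟨A, hA, s, Finset.mem_insert_of_mem hs, Set.inter_eq_right.2 hsA⟩, hne s hs⟩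

/-- An additive partition entropy does not distinguish partitions
that agree outside a null set. -/
theorem ape_eq_of_eq_off_null
    {Ω : Type*} [MeasurableSpace Ω] (P : Measure Ω) [IsProbabilityMeasure P]
    (I : Finset (Set Ω) → ℝ) (hAPE : IsAPE P I)
    (𝒜 ℬ : Finset (Set Ω)) (h𝒜 : IsFinPart 𝒜) (hℬ : IsFinPart ℬ)
    (Z : Set Ω) (hZ : MeasurableSet Z) (hZ0 : P Z = 0)
    (hres : restr 𝒜 Zᶜ = restr ℬ Zᶜ) :
    I 𝒜 = I ℬ := by
  classical
  have hZc : Zᶜ ≠ ∅ := by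
    intro h
    have h1 := (prob_compl_eq_one_iff (μ := P) hZ).2 hZ0
    simp [h] at h1
  have hD := isFinPart_insert_compl (h𝒜.join hℬ) hZ hZc
  have hne : ∀ E ∈ restr (join 𝒜 ℬ) Z, E ≠ ∅ := fun E hE => (mem_restr.1 hE).2
  have hsub : ∀ E ∈ restr (join 𝒜 ℬ) Z, (∃ A ∈ 𝒜, E ⊆ A) ∧ ∃ B ∈ ℬ, E ⊆ B := by
    intro E hE
    obtain ⟨⟨C, hC, rfl⟩, -⟩ := mem_restr.1 hE
    obtain ⟨⟨A, hA, B, hB, rfl⟩, -⟩ := mem_join.1 hC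
    exact ⟨⟨A, hA, fun x hx => hx.1.1⟩, B, hB, fun x hx => hx.1.2⟩
  have h1 := hAPE 𝒜 _ h𝒜 hD (indep_insert_compl P hZ hZ0 𝒜 _)
  have h2 := hAPE ℬ _ hℬ hD (indep_insert_compl P hZ hZ0 ℬ _)
  rw [join_insert h𝒜 _ hne fun E hE => (hsub E hE).1] at h1
  rw [join_insert hℬ _ hne fun E hE => (hsub E hE).2, ← hres] at h2
  linarith

end APE
end

section
/- Let (Ω,Σ,P) be a probability space whose measure P has the Darboux property and let I be an additive partition entropy. Let 𝒜 = {A₁,…,A_k,A_{k+1},…,Aₙ} and 𝒜' = {A'₁,…,A'_k,A_{k+1},…,Aₙ} be finite measurable partitions with P(A₁)=⋯=P(A_k)=P(A'₁)=⋯=P(A'_k). Then I(𝒜)=I(𝒜'). -/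
/-!
If `ℬ` is independent of both `𝒜` and `𝒜'`, and `𝒜 ∨ ℬ = 𝒜' ∨ ℬ`, then additivity gives
`I 𝒜 = I 𝒜'` (`entropy_eq_of_join_eq`). The proof consists in finding such a `ℬ`.

Partitions are handled as labellings `f : Ω → ι`, with `fibers f` the partition into nonempty
fibers. Let `f` and `f'` be labellings of `𝒜` and `𝒜'`, with head labels in the cyclic group
`Fin k`. By the Darboux property some `s : Ω → Fin k` splits every fiber of `(f, f')` into `k`
pieces of equal measure (`exists_equal_split_fibers`). Let `f''` be `s` on the head and `f` on the
tail, and let `g` be `s - f` on the head and `s` on the tail. Each value of `g` takes up a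
fraction `1 / k` of every fiber of `f`; since all head atoms have the same measure, it also takes
up a fraction `1 / k` of every fiber of `f''`. So `g` is independent of `f` and of `f''`, and given
`g` the labels `f` and `f''` determine each other. Hence `I (fibers f) = I (fibers f'')`
(`entropy_eq_newHead`). The same `f''` serves for `f'`, because `f` and `f'` have the same head
and agree on the tail.

The common measure of the head atoms may vanish, and the splitting argument covers that case too,
because labellings need not be surjective: `fibers f''` may then have fewer atoms than `fibers f`.
-/

open MeasureTheory Filter Topology

namespace APE

variable {Ω : Type*} [MeasurableSpace Ω]

/-- The partition of `Ω` into the nonempty fibers of a labelling `f` with finitely many labels.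
Indexing the fibers by points of `Ω` discards the empty ones, so `f` need not be surjective. -/
noncomputable def fibers {Ω ι : Type*} [Finite ι] (f : Ω → ι) : Finset (Set Ω) :=
  (((Set.toFinite (Set.range fun i : ι => f ⁻¹' {i})).subset
    (by rintro _ ⟨ω, rfl⟩; exact ⟨f ω, rfl⟩ :
      (Set.range fun ω => f ⁻¹' {f ω}) ⊆ Set.range fun i : ι => f ⁻¹' {i}))).toFinset

lemma mem_fibers {Ω ι : Type*} [Finite ι] {f : Ω → ι} {s : Set Ω} :
    s ∈ fibers f ↔ ∃ ω, f ⁻¹' {f ω} = s := by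
  simp [fibers]

/-- `fibers f` depends only on the equivalence relation `f ω = f ω'`. -/
lemma fibers_congr {Ω ι κ : Type*} [Finite ι] [Finite κ] {f : Ω → ι} {g : Ω → κ}
    (h : ∀ ω ω', f ω = f ω' ↔ g ω = g ω') : fibers f = fibers g := by
  ext s
  rw [mem_fibers, mem_fibers]
  have : ∀ ω, f ⁻¹' {f ω} = g ⁻¹' {g ω} := fun ω => by
    ext ω'
    simpa using h ω' ω
  simp [this]

lemma isFinPart_fibers {Ω ι : Type*} [MeasurableSpace Ω] [Finite ι] {f : Ω → ι}
    (hf : ∀ i, MeasurableSet (f ⁻¹' {i})) : IsFinPart (fibers f) := by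
  refine ⟨?_, ?_, ?_, ?_⟩
  · intro s hs
    obtain ⟨ω, rfl⟩ := mem_fibers.1 hs
    exact hf _
  · intro s hs
    obtain ⟨ω, rfl⟩ := mem_fibers.1 hs
    exact Set.Nonempty.ne_empty ⟨ω, rfl⟩
  · intro s hs t ht hst
    obtain ⟨ω, rfl⟩ := mem_fibers.1 hs
    obtain ⟨ω', rfl⟩ := mem_fibers.1 ht
    have hne : f ω ≠ f ω' := fun h => hst (by rw [h])
    exact Disjoint.preimage f (by simpa using hne)
  · exact Set.eq_univ_of_forall fun ω => ⟨_, mem_fibers.2 ⟨ω, rfl⟩, rfl⟩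

lemma join_fibers {Ω ι κ : Type*} [MeasurableSpace Ω] [Finite ι] [Finite κ]
    (f : Ω → ι) (g : Ω → κ) :
    join (fibers f) (fibers g) = fibers fun ω => (f ω, g ω) := by
  classical
  ext s
  simp only [join, Finset.mem_filter, Finset.mem_image, Finset.mem_product, Prod.exists,
    mem_fibers]
  constructor
  · rintro ⟨⟨_, _, ⟨⟨ω₁, rfl⟩, ω₂, rfl⟩, rfl⟩, hne⟩
    obtain ⟨ω, h₁, h₂⟩ := Set.nonempty_iff_ne_empty.2 hne
    refine ⟨ω, ?_⟩
    ext ω'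
    simp only [Set.mem_preimage, Set.mem_singleton_iff] at h₁ h₂
    simp [h₁, h₂]
  · rintro ⟨ω, rfl⟩
    refine ⟨⟨_, _, ⟨⟨ω, rfl⟩, ω, rfl⟩, ?_⟩, Set.Nonempty.ne_empty ⟨ω, rfl⟩⟩
    ext ω'
    simp

/-- Two partitions independent of a common third one, and having the same join with it, have the
same entropy. -/
lemma entropy_eq_of_join_eq {Ω ι ι' κ : Type*} [MeasurableSpace Ω] [Finite ι] [Finite ι']
    [Finite κ] {P : Measure Ω} {I : Finset (Set Ω) → ℝ} (hI : IsAPE P I)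
    {f : Ω → ι} {f' : Ω → ι'} {g : Ω → κ}
    (hf : ∀ i, MeasurableSet (f ⁻¹' {i})) (hf' : ∀ i, MeasurableSet (f' ⁻¹' {i}))
    (hg : ∀ r, MeasurableSet (g ⁻¹' {r}))
    (hfg : ∀ i r, P (f ⁻¹' {i} ∩ g ⁻¹' {r}) = P (f ⁻¹' {i}) * P (g ⁻¹' {r}))
    (hfg' : ∀ i r, P (f' ⁻¹' {i} ∩ g ⁻¹' {r}) = P (f' ⁻¹' {i}) * P (g ⁻¹' {r}))
    (h : ∀ ω ω', g ω = g ω' → (f ω = f ω' ↔ f' ω = f' ω')) :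
    I (fibers f) = I (fibers f') := by
  have h₁ := hI (fibers f) (fibers g) (isFinPart_fibers hf) (isFinPart_fibers hg) (by
    intro A hA B hB
    obtain ⟨ω, rfl⟩ := mem_fibers.1 hA
    obtain ⟨ω', rfl⟩ := mem_fibers.1 hB
    exact hfg _ _)
  have h₂ := hI (fibers f') (fibers g) (isFinPart_fibers hf') (isFinPart_fibers hg) (by
    intro A hA B hB
    obtain ⟨ω, rfl⟩ := mem_fibers.1 hA
    obtain ⟨ω', rfl⟩ := mem_fibers.1 hB
    exact hfg' _ _)
  have h₃ : join (fibers f) (fibers g) = join (fibers f') (fibers g) := by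
    rw [join_fibers, join_fibers]
    refine fibers_congr fun ω ω' => ?_
    simp only [Prod.mk.injEq]
    exact and_congr_left (h ω ω')
  rw [h₃] at h₁
  linarith

lemma measure_eq_sum_fibers {Ω ι : Type*} [MeasurableSpace Ω] [Fintype ι] (P : Measure Ω)
    {f : Ω → ι} (hf : ∀ i, MeasurableSet (f ⁻¹' {i})) {X : Set Ω} (hX : MeasurableSet X) :
    P X = ∑ i, P (f ⁻¹' {i} ∩ X) := by
  rw [← tsum_fintype (L := .unconditional _), ← measure_iUnion]
  · congr 1
    ext ω
    simp
  · intro i j hij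
    exact (Disjoint.preimage f (by simpa using hij)).mono Set.inter_subset_left
      Set.inter_subset_left
  · exact fun i => (hf i).inter hX

/-- A labelling `g` by `k` labels that splits each fiber of `f` into `k` pieces of equal measure
is independent of `f`. -/
lemma indep_of_equal_split {Ω ι : Type*} [MeasurableSpace Ω] [Fintype ι] {P : Measure Ω}
    [IsProbabilityMeasure P] {k : ℕ} [NeZero k] {f : Ω → ι} {g : Ω → Fin k}
    (hf : ∀ i, MeasurableSet (f ⁻¹' {i})) (hg : ∀ r, MeasurableSet (g ⁻¹' {r}))
    (a : ι → ENNReal) (h : ∀ i r, P (f ⁻¹' {i} ∩ g ⁻¹' {r}) = a i) (i : ι) (r : Fin k) :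
    P (f ⁻¹' {i} ∩ g ⁻¹' {r}) = P (f ⁻¹' {i}) * P (g ⁻¹' {r}) := by
  have h₁ : ∀ i, P (f ⁻¹' {i}) = k * a i := fun i => by
    rw [measure_eq_sum_fibers P hg (hf i)]
    simp [Set.inter_comm (g ⁻¹' _), h]
  have h₂ : P (g ⁻¹' {r}) = ∑ i, a i := by
    rw [measure_eq_sum_fibers P hf (hg r)]
    simp [h]
  have h₃ : (k : ENNReal) * ∑ i, a i = 1 := by
    rw [Finset.mul_sum, ← measure_univ (μ := P), measure_eq_sum_fibers P hf MeasurableSet.univ]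
    simp [h₁]
  rw [h, h₁, h₂, mul_right_comm, h₃, one_mul]

/-- Darboux measures can split a measurable set into finitely many pieces of equal measure. -/
lemma exists_equal_split {Ω : Type*} [MeasurableSpace Ω] {P : Measure Ω} [IsFiniteMeasure P]
    (hD : Darboux P) (θ : ENNReal) (k : ℕ) : ∀ X : Set Ω, MeasurableSet X →
      P X = ((k + 1 : ℕ) : ENNReal) * θ →
      ∃ s : Ω → Fin (k + 1), (∀ r, MeasurableSet (s ⁻¹' {r})) ∧
        ∀ r, P (X ∩ s ⁻¹' {r}) = θ := by
  classical
  induction k with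
  | zero =>
    intro X hX h
    refine ⟨fun _ => 0, fun r => ?_, fun r => ?_⟩
    · exact MeasurableSet.const _
    · obtain rfl : r = 0 := Fin.fin_one_eq_zero r
      simpa using h
  | succ k ih =>
    intro X hX h
    have hθ : θ ≠ ⊤ := by
      rintro rfl
      refine measure_ne_top P X (h.trans (ENNReal.mul_top ?_))
      exact_mod_cast Nat.succ_ne_zero (k + 1)
    obtain ⟨B, hB, hBX, hPB⟩ : ∃ B : Set Ω, MeasurableSet B ∧ B ⊆ X ∧ P B = θ := by
      rcases eq_or_ne θ 0 with rfl | h0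
      · exact ⟨∅, MeasurableSet.empty, Set.empty_subset _, measure_empty⟩
      · refine hD X hX θ (pos_iff_ne_zero.2 h0) ?_
        rw [h]
        conv_lhs => rw [← one_mul θ]
        rw [ENNReal.mul_lt_mul_iff_left h0 hθ]
        exact_mod_cast (by omega : 1 < k + 1 + 1)
    obtain ⟨s, hs, hPs⟩ := ih (X \ B) (hX.diff hB) (by
      rw [measure_sdiff hBX hB.nullMeasurableSet (measure_ne_top P B), h, hPB]
      refine ENNReal.sub_eq_of_eq_add hθ ?_
      push_cast
      ring)
    have h0 : (fun ω => if ω ∈ B then (0 : Fin (k + 1 + 1)) else (s ω).succ) ⁻¹' {0} = B := by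
      ext ω
      by_cases hω : ω ∈ B <;> simp [hω, Fin.succ_ne_zero]
    have h1 : ∀ r : Fin (k + 1),
        (fun ω => if ω ∈ B then (0 : Fin (k + 1 + 1)) else (s ω).succ) ⁻¹' {r.succ}
          = s ⁻¹' {r} \ B := by
      intro r
      ext ω
      by_cases hω : ω ∈ B <;> simp [hω, (Fin.succ_ne_zero _).symm]
    refine ⟨fun ω => if ω ∈ B then 0 else (s ω).succ, fun r => ?_, fun r => ?_⟩
    · refine Fin.cases ?_ (fun r => ?_) r
      · rw [h0]; exact hB
      · rw [h1]; exact (hs r).diff hB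
    · refine Fin.cases ?_ (fun r => ?_) r
      · rw [h0, Set.inter_eq_right.2 hBX, hPB]
      · rw [h1, ← hPs r]
        congr 1
        ext ω
        simp only [Set.mem_inter_iff, Set.mem_sdiff]
        tauto

/-- A single labelling splits all fibers of `F` simultaneously into `k` pieces of equal
measure. -/
lemma exists_equal_split_fibers {Ω ι : Type*} [MeasurableSpace Ω] [Fintype ι] {P : Measure Ω}
    [IsFiniteMeasure P] (hD : Darboux P) (k : ℕ) [NeZero k] {F : Ω → ι}
    (hF : ∀ i, MeasurableSet (F ⁻¹' {i})) :
    ∃ s : Ω → Fin k, (∀ r, MeasurableSet (s ⁻¹' {r})) ∧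
      ∀ i r, P (F ⁻¹' {i} ∩ s ⁻¹' {r}) = P (F ⁻¹' {i}) / k := by
  obtain ⟨l, rfl⟩ := Nat.exists_eq_succ_of_ne_zero (NeZero.ne k)
  have hl : ((l + 1 : ℕ) : ENNReal) ≠ 0 := by exact_mod_cast Nat.succ_ne_zero l
  choose s hs hPs using fun i =>
    exists_equal_split hD (P (F ⁻¹' {i}) / (l + 1 : ℕ)) l (F ⁻¹' {i}) (hF i)
      (ENNReal.mul_div_cancel hl (ENNReal.natCast_ne_top _)).symm
  refine ⟨fun ω => s (F ω) ω, fun r => ?_, fun i r => ?_⟩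
  · have : (fun ω => s (F ω) ω) ⁻¹' {r} = ⋃ i, F ⁻¹' {i} ∩ s i ⁻¹' {r} := by
      ext ω
      simp
    rw [this]
    exact MeasurableSet.iUnion fun i => (hF i).inter (hs i r)
  · rw [← hPs i r]
    congr 1
    ext ω
    simp only [Set.mem_inter_iff, Set.mem_preimage, Set.mem_singleton_iff]
    refine and_congr_right fun h => ?_
    rw [h]

/-- A function of two labellings with measurable fibers has measurable fibers. -/
lemma measurableSet_fiber_comp {Ω ι κ τ : Type*} [MeasurableSpace Ω] [Finite ι] [Finite κ]
    {f : Ω → ι} {s : Ω → κ} (hf : ∀ i, MeasurableSet (f ⁻¹' {i}))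
    (hs : ∀ r, MeasurableSet (s ⁻¹' {r})) (φ : ι → κ → τ) (t : τ) :
    MeasurableSet ((fun ω => φ (f ω) (s ω)) ⁻¹' {t}) := by
  have : (fun ω => φ (f ω) (s ω)) ⁻¹' {t} =
      ⋃ i, ⋃ r, ⋃ _ : φ i r = t, f ⁻¹' {i} ∩ s ⁻¹' {r} := by
    ext ω
    simp only [Set.mem_preimage, Set.mem_singleton_iff, Set.mem_iUnion, Set.mem_inter_iff]
    constructor
    · exact fun h => ⟨_, _, h, rfl, rfl⟩
    · rintro ⟨_, _, h, rfl, rfl⟩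
      exact h
  rw [this]
  exact MeasurableSet.iUnion fun i => MeasurableSet.iUnion fun r => MeasurableSet.iUnion fun _ =>
    (hf i).inter (hs r)

/-- Replacing the head labels of `f` by `s`, where `s` splits each fiber of `f` equally, preserves
the entropy. The auxiliary partition is labelled by `g = s - f` on the head and by `g = s` on the
tail: given `g`, the labels `f` and `s` on the head determine each other. -/
lemma entropy_eq_newHead {Ω T : Type*} [MeasurableSpace Ω] [Fintype T] {P : Measure Ω}
    [IsProbabilityMeasure P] {I : Finset (Set Ω) → ℝ} (hI : IsAPE P I) {k : ℕ} [NeZero k]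
    {f : Ω → Fin k ⊕ T} (hf : ∀ i, MeasurableSet (f ⁻¹' {i})) {c : ENNReal}
    (hc : ∀ h, P (f ⁻¹' {Sum.inl h}) = c)
    {s : Ω → Fin k} (hs : ∀ r, MeasurableSet (s ⁻¹' {r}))
    (hfs : ∀ i r, P (f ⁻¹' {i} ∩ s ⁻¹' {r}) = P (f ⁻¹' {i}) / k) :
    I (fibers f) = I (fibers fun ω =>
      (Sum.elim (fun _ => Sum.inl (s ω)) Sum.inr (f ω) : Fin k ⊕ T)) := by
  have hf'm : ∀ i, MeasurableSet ((fun ω =>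
      (Sum.elim (fun _ => Sum.inl (s ω)) Sum.inr (f ω) : Fin k ⊕ T)) ⁻¹' {i}) :=
    measurableSet_fiber_comp hf hs fun i r => Sum.elim (fun _ => Sum.inl r) Sum.inr i
  have hgm : ∀ r, MeasurableSet ((fun ω =>
      Sum.elim (fun h => s ω - h) (fun _ => s ω) (f ω)) ⁻¹' {r}) :=
    measurableSet_fiber_comp hf hs fun i r => Sum.elim (fun h => r - h) (fun _ => r) i
  refine entropy_eq_of_join_eq hI (g := fun ω => Sum.elim (fun h => s ω - h) (fun _ => s ω) (f ω))
    hf hf'm hgm ?_ ?_ ?_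
  · refine indep_of_equal_split hf hgm (fun i => P (f ⁻¹' {i}) / k) fun i r => ?_
    rcases i with h | t
    · rw [← hfs (Sum.inl h) (r + h)]
      congr 1
      ext ω
      simp only [Set.mem_inter_iff, Set.mem_preimage, Set.mem_singleton_iff]
      refine and_congr_right fun hω => ?_
      simp [hω, sub_eq_iff_eq_add]
    · rw [← hfs (Sum.inr t) r]
      congr 1
      ext ω
      simp only [Set.mem_inter_iff, Set.mem_preimage, Set.mem_singleton_iff]
      refine and_congr_right fun hω => ?_
      simp [hω]
  · refine indep_of_equal_split hf'm hgm
      (Sum.elim (fun _ => c / k) fun t => P (f ⁻¹' {Sum.inr t}) / k) fun i r => ?_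
    rcases i with h | t
    · rw [Sum.elim_inl, ← hc (h - r), ← hfs (Sum.inl (h - r)) h]
      congr 1
      ext ω
      simp only [Set.mem_inter_iff, Set.mem_preimage, Set.mem_singleton_iff]
      rcases hω : f ω with h' | t'
      · simp only [Sum.elim_inl, Sum.inl.injEq]
        constructor
        · rintro ⟨rfl, rfl⟩
          exact ⟨by abel, rfl⟩
        · rintro ⟨rfl, rfl⟩
          exact ⟨rfl, by abel⟩
      · simp
    · rw [Sum.elim_inr, ← hfs (Sum.inr t) r]
      congr 1
      ext ω
      simp only [Set.mem_inter_iff, Set.mem_preimage, Set.mem_singleton_iff]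
      rcases hω : f ω with h' | t' <;> simp
  · intro ω ω'
    rcases hω : f ω with h | t <;> rcases hω' : f ω' with h' | t'
    · simp only [Sum.elim_inl, Sum.inl.injEq]
      intro hg
      constructor
      · rintro rfl
        exact sub_left_injective hg
      · intro hss
        rw [hss] at hg
        exact sub_right_injective hg
    · simp
    · simp
    · simp

/-- The theorem for partitions given by labellings in `Fin k ⊕ T`, with head `Fin k` and tail `T`:
both are compared with the partition whose head is labelled by a common equal split `s`. -/
lemma entropy_eq_of_labels {Ω T : Type*} [MeasurableSpace Ω] [Fintype T] {P : Measure Ω}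
    [IsProbabilityMeasure P] (hD : Darboux P) {I : Finset (Set Ω) → ℝ} (hI : IsAPE P I) {k : ℕ}
    {f f' : Ω → Fin k ⊕ T} (hf : ∀ i, MeasurableSet (f ⁻¹' {i}))
    (hf' : ∀ i, MeasurableSet (f' ⁻¹' {i})) (htail : ∀ ω t, f ω = Sum.inr t ↔ f' ω = Sum.inr t)
    {c : ENNReal} (hc : ∀ h, P (f ⁻¹' {Sum.inl h}) = c)
    (hc' : ∀ h, P (f' ⁻¹' {Sum.inl h}) = c) :
    I (fibers f) = I (fibers f') := by
  rcases Nat.eq_zero_or_pos k with rfl | hk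
  · congr 2
    ext1 ω
    rcases hω : f ω with h | t
    · exact h.elim0
    · exact ((htail _ _).1 hω).symm
  have : NeZero k := ⟨hk.ne'⟩
  obtain ⟨s, hs, hPs⟩ := exists_equal_split_fibers hD k
    (F := fun ω => (f ω, f' ω)) (measurableSet_fiber_comp hf hf' Prod.mk)
  have hfs : ∀ i r, P (f ⁻¹' {i} ∩ s ⁻¹' {r}) = P (f ⁻¹' {i}) / k := fun i r => by
    rw [measure_eq_sum_fibers P hf' (hf i), measure_eq_sum_fibers P hf' ((hf i).inter (hs r)),
      ENNReal.div_eq_inv_mul, Finset.mul_sum]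
    refine Finset.sum_congr rfl fun j _ => ?_
    have hF : (fun ω => (f ω, f' ω)) ⁻¹' {(i, j)} = f' ⁻¹' {j} ∩ f ⁻¹' {i} := by
      ext ω
      simp [and_comm]
    rw [← ENNReal.div_eq_inv_mul, ← Set.inter_assoc, ← hF, hPs]
  have hfs' : ∀ i r, P (f' ⁻¹' {i} ∩ s ⁻¹' {r}) = P (f' ⁻¹' {i}) / k := fun i r => by
    rw [measure_eq_sum_fibers P hf (hf' i), measure_eq_sum_fibers P hf ((hf' i).inter (hs r)),
      ENNReal.div_eq_inv_mul, Finset.mul_sum]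
    refine Finset.sum_congr rfl fun j _ => ?_
    have hF : (fun ω => (f ω, f' ω)) ⁻¹' {(j, i)} = f ⁻¹' {j} ∩ f' ⁻¹' {i} := by
      ext ω
      simp
    rw [← ENNReal.div_eq_inv_mul, ← Set.inter_assoc, ← hF, hPs]
  rw [entropy_eq_newHead hI hf hc hs hfs, entropy_eq_newHead hI hf' hc' hs hfs']
  congr 2
  ext1 ω
  rcases hω : f ω with h | t
  · rcases hω' : f' ω with h' | t'
    · rfl
    · simp [(htail _ _).2 hω'] at hω
  · rw [(htail _ _).1 hω]

/-- An indexed partition is the family of fibers of a labelling. -/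
lemma exists_label {Ω : Type*} [MeasurableSpace Ω] {n : ℕ} {A : Fin n → Set Ω}
    (hA : IsPartIdx A) : ∃ f : Ω → Fin n, ∀ i, f ⁻¹' {i} = A i := by
  obtain ⟨-, -, hdisj, hcov⟩ := hA
  choose f hf using fun ω => Set.mem_iUnion.1 (hcov ▸ Set.mem_univ ω : ω ∈ ⋃ i, A i)
  refine ⟨f, fun i => ?_⟩
  ext ω
  constructor
  · rintro rfl
    exact hf ω
  · intro hω
    by_contra hne
    exact Set.disjoint_left.1 (hdisj _ _ hne) (hf ω) hω

lemma idxFinset_eq_fibers {Ω ι : Type*} [MeasurableSpace Ω] [Finite ι] {n : ℕ}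
    {A : Fin n → Set Ω} (hA : IsPartIdx A) {f : Ω → Fin n} (hf : ∀ i, f ⁻¹' {i} = A i)
    (e : Fin n ≃ ι) : idxFinset A = fibers fun ω => e (f ω) := by
  rw [fibers_congr (g := f) (by simp)]
  ext s
  simp only [idxFinset, Finset.mem_image, Finset.mem_univ, true_and, mem_fibers, hf]
  constructor
  · rintro ⟨i, rfl⟩
    obtain ⟨ω, hω⟩ := Set.nonempty_iff_ne_empty.2 (hA.2.1 i)
    rw [← hf i] at hω
    exact ⟨ω, congrArg A hω⟩
  · rintro ⟨ω, rfl⟩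
    exact ⟨_, rfl⟩

/-- An additive partition entropy does not distinguish partitions
obtained by replacing the first `k` atoms, all of a common measure, by other
atoms of that same measure. -/
theorem ape_eq_of_equal_measure_head
    {Ω : Type*} [MeasurableSpace Ω] (P : Measure Ω) [IsProbabilityMeasure P]
    (hD : Darboux P) (I : Finset (Set Ω) → ℝ) (hAPE : IsAPE P I)
    (n k : ℕ) (A A' : Fin n → Set Ω) (hA : IsPartIdx A) (hA' : IsPartIdx A')
    (htail : ∀ i : Fin n, k ≤ (i : ℕ) → A' i = A i)
    (c : ENNReal) (hc : ∀ i : Fin n, (i : ℕ) < k → P (A i) = c ∧ P (A' i) = c) :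
    I (idxFinset A) = I (idxFinset A') := by
  -- Heads are indexed by `i < k`; only `min k n` of them exist when `k > n`.
  obtain ⟨l, t, rfl, hl⟩ : ∃ l t, n = l + t ∧ ∀ i : Fin n, (i : ℕ) < k ↔ (i : ℕ) < l :=
    ⟨min k n, n - min k n, by omega, fun i => by have := i.2; omega⟩
  obtain ⟨f, hf⟩ := exists_label hA
  obtain ⟨f', hf'⟩ := exists_label hA'
  let e : Fin (l + t) ≃ Fin l ⊕ Fin t := finSumFinEquiv.symm
  have he : ∀ (g : Ω → Fin (l + t)) x,
      (fun ω => e (g ω)) ⁻¹' {x} = g ⁻¹' {finSumFinEquiv x} := fun g x => by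
    ext ω
    simp [e, Equiv.symm_apply_eq]
  have hhead : ∀ h : Fin l, ((Fin.castAdd t h : Fin (l + t)) : ℕ) < k := fun h =>
    (hl _).2 h.2
  rw [idxFinset_eq_fibers hA hf e, idxFinset_eq_fibers hA' hf' e]
  refine entropy_eq_of_labels (c := c) hD hAPE (fun x => ?_) (fun x => ?_) (fun ω x => ?_)
    (fun h => ?_) (fun h => ?_)
  · rw [he, hf]
    exact hA.1 _
  · rw [he, hf']
    exact hA'.1 _
  · have hk : k ≤ ((Fin.natAdd l x : Fin (l + t)) : ℕ) :=
      not_lt.1 fun h => absurd ((hl _).1 h) (by simp)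
    have h₁ := he f (Sum.inr x)
    have h₂ := he f' (Sum.inr x)
    rw [hf, finSumFinEquiv_apply_right] at h₁
    rw [hf', finSumFinEquiv_apply_right, htail _ hk, ← h₁] at h₂
    exact (Set.ext_iff.1 h₂ ω).symm
  · rw [he, hf, finSumFinEquiv_apply_left]
    exact (hc _ (hhead h)).1
  · rw [he, hf', finSumFinEquiv_apply_left]
    exact (hc _ (hhead h)).2

end APE
end

section
/- Let (Ω,Σ,P) be a probability space whose measure P has the Darboux property. For any finite measurable partition 𝒜 and any numbers c₁,…,c_k ≥ 0 with c₁+⋯+c_k = 1, there exist pairwise disjoint measurable sets C₁,…,C_k with union Ω such that P(Cⱼ)=cⱼ for all j and P(Cⱼ∩A)=cⱼ·P(A) for every atom A of 𝒜 and every j. -/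
/-! The Darboux property lets one cut any measurable set `A` into `k` measurable pieces of
prescribed measures adding up to `P A`, by splitting off one piece at a time
(`Darboux.exists_split`). Cutting every atom `A` of `𝒜` into pieces `D A j` of measure `cⱼ P(A)`
and gluing the `j`-th pieces of all atoms, `Cⱼ = ⋃_A D A j`, yields the required sets:
`Cⱼ ∩ A = D A j` because distinct atoms are disjoint, and `P(Cⱼ) = cⱼ` follows by summing
`P(Cⱼ ∩ A) = cⱼ P(A)` over the atoms. -/

open MeasureTheory Filter Topology

namespace APE

variable {Ω : Type*} [MeasurableSpace Ω]

/-- The Darboux property extended to the endpoints `θ = 0` and `θ = P A`. -/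
lemma Darboux.exists_subset {P : Measure Ω} (hD : Darboux P) {A : Set Ω} (hA : MeasurableSet A)
    {θ : ENNReal} (hθ : θ ≤ P A) : ∃ B, MeasurableSet B ∧ B ⊆ A ∧ P B = θ := by
  rcases eq_or_ne θ 0 with rfl | h0
  · exact ⟨∅, .empty, Set.empty_subset _, measure_empty⟩
  rcases hθ.eq_or_lt with rfl | hlt
  · exact ⟨A, hA, subset_rfl, rfl⟩
  · exact hD A hA θ (pos_iff_ne_zero.2 h0) hlt

/-- A measurable set can be cut into `n + 1` pieces of prescribed measures. At least one piece is
needed: a nonempty null set is not a union of zero pieces. -/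
lemma Darboux.exists_split {P : Measure Ω} [IsFiniteMeasure P] (hD : Darboux P) (n : ℕ) :
    ∀ {A : Set Ω}, MeasurableSet A → ∀ f : Fin (n + 1) → ENNReal, ∑ j, f j = P A →
      ∃ D : Fin (n + 1) → Set Ω, (∀ j, MeasurableSet (D j)) ∧
        (∀ i j, i ≠ j → Disjoint (D i) (D j)) ∧ (⋃ j, D j) = A ∧ ∀ j, P (D j) = f j := by
  induction n with
  | zero =>
    intro A hA f hf
    refine ⟨fun _ => A, fun _ => hA, fun i j h => (h (Subsingleton.elim (α := Fin 1) _ _)).elim,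
      Set.iUnion_const A, fun j => ?_⟩
    rw [← hf, Subsingleton.elim (α := Fin 1) j 0]
    simp
  | succ n ih =>
    intro A hA f hf
    rw [Fin.sum_univ_succ] at hf
    obtain ⟨B, hB, hBA, hPB⟩ := hD.exists_subset hA (hf ▸ le_self_add : f 0 ≤ P A)
    have hrest : ∑ j : Fin (n + 1), f j.succ = P (A \ B) := by
      rw [measure_sdiff hBA hB.nullMeasurableSet (measure_ne_top P B), ← hf, hPB,
        ENNReal.add_sub_cancel_left (hPB ▸ measure_ne_top P B)]
    obtain ⟨D, hDm, hDd, hDU, hDP⟩ := ih (hA.diff hB) (fun j => f j.succ) hrest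
    have hBD : ∀ j, Disjoint B (D j) := fun j =>
      Set.disjoint_sdiff_right.mono_right (hDU ▸ Set.subset_iUnion D j)
    refine ⟨Fin.cons B D, ?_, ?_, ?_, ?_⟩
    · exact Fin.cases hB hDm
    · refine Fin.cases (Fin.cases (fun h => (h rfl).elim) fun j _ => hBD j) fun i =>
        Fin.cases (fun _ => (hBD i).symm) fun j h => hDd i j fun e => h (e ▸ rfl)
    · ext x
      have hx : (∃ j, x ∈ D j) ↔ x ∈ A \ B := by rw [← hDU, Set.mem_iUnion]
      simp only [Set.mem_iUnion, Fin.exists_fin_succ, Fin.cons_zero, Fin.cons_succ, hx]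
      have := @hBA x
      simp only [Set.mem_sdiff]
      tauto
    · exact Fin.cases hPB hDP

/-- Existence of a partition with prescribed measures independent
of a given partition. -/
theorem exists_indep_partition_of_prescribed_measures
    {Ω : Type*} [MeasurableSpace Ω] (P : Measure Ω) [IsProbabilityMeasure P]
    (hD : Darboux P) (𝒜 : Finset (Set Ω)) (h𝒜 : IsFinPart 𝒜)
    (k : ℕ) (c : Fin k → ℝ) (hc0 : ∀ j, 0 ≤ c j) (hc1 : ∑ j, c j = 1) :
    ∃ C : Fin k → Set Ω, (∀ j, MeasurableSet (C j)) ∧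
      (∀ i j, i ≠ j → Disjoint (C i) (C j)) ∧ (⋃ j, C j) = Set.univ ∧
      (∀ j, P (C j) = ENNReal.ofReal (c j)) ∧
      ∀ j, ∀ A ∈ 𝒜, P (C j ∩ A) = ENNReal.ofReal (c j) * P A := by
  obtain ⟨hm, -, hdisj, hU⟩ := h𝒜
  obtain _ | n := k
  · simp at hc1
  have hsum : ∑ j, ENNReal.ofReal (c j) = 1 := by
    rw [← ENNReal.ofReal_sum_of_nonneg fun j _ => hc0 j, hc1, ENNReal.ofReal_one]
  have key : ∀ A : Set Ω, A ∈ 𝒜 → _ := fun A hA =>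
    hD.exists_split n (hm A hA) (fun j => ENNReal.ofReal (c j) * P A)
      (by rw [← Finset.sum_mul, hsum, one_mul])
  choose! D hDm hDd hDU hDP using key
  have hsub : ∀ A ∈ 𝒜, ∀ j, D A j ⊆ A := fun A hA j => by
    conv_rhs => rw [← hDU A hA]
    exact Set.subset_iUnion (D A) j
  have hne : ∀ A ∈ 𝒜, ∀ B ∈ 𝒜, A ≠ B → Disjoint A B := fun A hA B hB h => hdisj hA hB h
  have hpieces : (𝒜 : Set (Set Ω)).Pairwise fun A B => ∀ i j, Disjoint (D A i) (D B j) :=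
    fun A hA B hB h i j => (hne A hA B hB h).mono (hsub A hA i) (hsub B hB j)
  refine ⟨fun j => ⋃ A ∈ 𝒜, D A j, fun j => 𝒜.measurableSet_biUnion fun A hA => hDm A hA j,
    fun i j hij => ?_, ?_, fun j => ?_, fun j A hA => ?_⟩
  · simp only [Set.disjoint_iUnion_left, Set.disjoint_iUnion_right]
    intro B hB A hA
    rcases eq_or_ne A B with rfl | h
    · exact hDd A hA i j hij
    · exact hpieces hA hB h i j
  · refine Set.eq_univ_of_forall fun x => ?_
    obtain ⟨A, hA, hx⟩ := (hU ▸ Set.mem_univ x : x ∈ ⋃₀ (𝒜 : Set (Set Ω)))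
    rw [← hDU A hA] at hx
    obtain ⟨j, hj⟩ := Set.mem_iUnion.1 hx
    exact Set.mem_iUnion.2 ⟨j, Set.mem_iUnion₂.2 ⟨A, hA, hj⟩⟩
  · have htot : ∑ A ∈ 𝒜, P A = 1 := by
      have hU' : ⋃ A ∈ 𝒜, id A = Set.univ := hU ▸ Set.sUnion_eq_biUnion.symm
      rw [← measure_univ (μ := P), ← hU', measure_biUnion_finset hdisj hm]
      rfl
    rw [measure_biUnion_finset (fun A hA B hB h => hpieces hA hB h j j) fun A hA => hDm A hA j,
      Finset.sum_congr rfl fun A hA => hDP A hA j, ← Finset.mul_sum, htot, mul_one]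
  · have : (⋃ B ∈ 𝒜, D B j) ∩ A = D A j := by
      refine subset_antisymm ?_ fun x hx => ⟨Set.mem_iUnion₂.2 ⟨A, hA, hx⟩, hsub A hA j hx⟩
      rintro x ⟨hx, hxA⟩
      obtain ⟨B, hB, hxB⟩ := Set.mem_iUnion₂.1 hx
      obtain rfl : B = A := by
        by_contra h
        exact Set.disjoint_left.1 (hne B hB A hA h) (hsub B hB j hxB) hxA
      exact hxB
    rw [this, hDP A hA j]

end APE
end

section
/- Let (Ω,Σ,P) be a probability space whose measure P has the Darboux property. For any finite measurable partitions 𝒜₁,…,𝒜ₙ and any numbers c₁,…,c_k ≥ 0 with c₁+⋯+c_k = 1, there exist pairwise disjoint measurable sets C₁,…,C_k with union Ω such that P(Cⱼ)=cⱼ for all j and P(Cⱼ∩A)=cⱼ·P(A) for every j, every i, and every atom A of 𝒜ᵢ. -/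
/-! Under the Darboux property a measurable set `E` can be cut successively into measurable pieces
of any prescribed measures that sum to `P E`. To be proportional on finitely many measurable sets
at once, a partition need only be proportional on each cell of the algebra they generate; this is
done by induction on the family: for a new set `A`, partition `E ∩ A` and `E \ A` separately in the
given proportions and glue the corresponding pieces. The theorem is the case
`E = Ω` of `Darboux.exists_proportional_pieces`, for the family of all atoms of all the given
partitions. -/

open MeasureTheory Filter Topology

namespace APE

variable {Ω : Type*} [MeasurableSpace Ω]

theorem Darboux.exists_subset_of_le {P : Measure Ω} (hD : Darboux P) {E : Set Ω}
    (hE : MeasurableSet E) {θ : ENNReal} (hθ : θ ≤ P E) :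
    ∃ B, MeasurableSet B ∧ B ⊆ E ∧ P B = θ := by
  rcases eq_or_ne θ 0 with rfl | h0
  · exact ⟨∅, MeasurableSet.empty, Set.empty_subset _, measure_empty⟩
  rcases hθ.eq_or_lt with rfl | hlt
  · exact ⟨E, hE, subset_rfl, rfl⟩
  · exact hD E hE θ (pos_iff_ne_zero.2 h0) hlt

/-- Cutting `E` into pieces of prescribed measures. There is at least one piece, since no pieces
would not cover a nonempty null set `E`. -/
theorem Darboux.exists_pieces {P : Measure Ω} [IsFiniteMeasure P] (hD : Darboux P) :
    ∀ (k : ℕ) (d : Fin (k + 1) → ENNReal) (E : Set Ω), MeasurableSet E → ∑ j, d j = P E →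
      ∃ C : Fin (k + 1) → Set Ω, (∀ j, MeasurableSet (C j)) ∧
        (∀ i j, i ≠ j → Disjoint (C i) (C j)) ∧ (⋃ j, C j) = E ∧ ∀ j, P (C j) = d j := by
  intro k
  induction k with
  | zero =>
    intro d E hE hd
    refine ⟨fun _ => E, fun _ => hE, fun i j hij => (hij (by omega)).elim,
      Set.iUnion_const E, fun j => ?_⟩
    rw [← hd, Fin.sum_univ_one, show j = 0 by omega]
  | succ k ih =>
    intro d E hE hd
    rw [Fin.sum_univ_succ] at hd
    obtain ⟨B, hB, hBE, hPB⟩ := hD.exists_subset_of_le hE (θ := d 0) (hd ▸ le_self_add)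
    have hrest : ∑ j : Fin (k + 1), d j.succ = P (E \ B) := by
      rw [measure_sdiff hBE hB.nullMeasurableSet (measure_ne_top P B), ← hd, hPB]
      exact (ENNReal.add_sub_cancel_left (hPB ▸ measure_ne_top P B)).symm
    obtain ⟨C, hCm, hCd, hCu, hCP⟩ := ih (fun j => d j.succ) (E \ B) (hE.diff hB) hrest
    have hdisj : ∀ j, Disjoint B (C j) := fun j =>
      Set.disjoint_sdiff_right.mono_right (hCu ▸ Set.subset_iUnion C j)
    refine ⟨Fin.cons B C, fun j => ?_, fun i j hij => ?_, ?_, fun j => ?_⟩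
    · cases j using Fin.cases with
      | zero => exact hB
      | succ j => exact hCm j
    · cases i using Fin.cases with
      | zero =>
        cases j using Fin.cases with
        | zero => exact (hij rfl).elim
        | succ j => exact hdisj j
      | succ i =>
        cases j using Fin.cases with
        | zero => exact (hdisj i).symm
        | succ j => exact hCd i j fun h => hij (congrArg Fin.succ h)
    · ext x
      have hx := Set.ext_iff.1 hCu x
      simp only [Set.mem_iUnion, Set.mem_sdiff] at hx
      simp only [Set.mem_iUnion, Fin.exists_fin_succ, Fin.cons_zero, Fin.cons_succ, hx]
      have := @hBE x
      tauto
    · cases j using Fin.cases with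
      | zero => exact hPB
      | succ j => exact hCP j

/-- Cutting `E` in proportions `d` simultaneously along every set of a finite measurable family
`S`. The set `E` varies in the induction: adjoining `A` to `S` splits `E` into `E ∩ A` and
`E \ A`. -/
theorem Darboux.exists_proportional_pieces {P : Measure Ω} [IsFiniteMeasure P] (hD : Darboux P)
    {k : ℕ} (d : Fin (k + 1) → ENNReal) (hd : ∑ j, d j = 1) (S : Finset (Set Ω)) :
    (∀ A ∈ S, MeasurableSet A) → ∀ E : Set Ω, MeasurableSet E →
      ∃ C : Fin (k + 1) → Set Ω, (∀ j, MeasurableSet (C j)) ∧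
        (∀ i j, i ≠ j → Disjoint (C i) (C j)) ∧ (⋃ j, C j) = E ∧
        (∀ j, P (C j) = d j * P E) ∧ ∀ j, ∀ A ∈ S, P (C j ∩ A) = d j * P (E ∩ A) := by
  classical
  induction S using Finset.induction_on with
  | empty =>
    intro _ E hE
    obtain ⟨C, hCm, hCd, hCu, hCP⟩ := hD.exists_pieces k (fun j => d j * P E) E hE
      (by rw [← Finset.sum_mul, hd, one_mul])
    exact ⟨C, hCm, hCd, hCu, hCP, by simp⟩
  | insert A S _ ih =>
    intro hS E hE
    have hA : MeasurableSet A := hS A (Finset.mem_insert_self A S)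
    have hS' : ∀ B ∈ S, MeasurableSet B := fun B hB => hS B (Finset.mem_insert_of_mem hB)
    obtain ⟨C, hCm, hCd, hCu, hCP, hCS⟩ := ih hS' (E ∩ A) (hE.inter hA)
    obtain ⟨D, hDm, hDd, hDu, hDP, hDS⟩ := ih hS' (E \ A) (hE.diff hA)
    have hCA : ∀ j, C j ⊆ A := fun j =>
      ((Set.subset_iUnion C j).trans hCu.subset).trans Set.inter_subset_right
    have hDA : ∀ j, Disjoint A (D j) := fun j =>
      Set.disjoint_sdiff_right.mono_right (hDu ▸ Set.subset_iUnion D j)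
    have hCD : ∀ i j, Disjoint (C i) (D j) := fun i j => (hDA j).mono_left (hCA i)
    refine ⟨fun j => C j ∪ D j, fun j => (hCm j).union (hDm j), fun i j hij => ?_, ?_,
      fun j => ?_, fun j B hB => ?_⟩
    · simp only [Set.disjoint_union_left, Set.disjoint_union_right]
      exact ⟨⟨hCd i j hij, (hCD j i).symm⟩, hCD i j, hDd i j hij⟩
    · rw [Set.iUnion_union_distrib, hCu, hDu, Set.inter_union_sdiff]
    · rw [measure_union (hCD j j) (hDm j), hCP, hDP, ← mul_add, measure_inter_add_sdiff E hA]
    · rcases Finset.mem_insert.1 hB with rfl | hB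
      · rw [Set.union_inter_distrib_right, Set.inter_eq_left.2 (hCA j),
          (hDA j).symm.inter_eq, Set.union_empty, hCP]
      · rw [Set.union_inter_distrib_right,
          measure_union ((hCD j j).mono Set.inter_subset_left Set.inter_subset_left)
            ((hDm j).inter (hS' B hB)), hCS j B hB, hDS j B hB, ← mul_add,
          ← measure_inter_add_sdiff (E ∩ B) hA]
        congr 3
        · exact Set.inter_right_comm E A B
        · ext x
          simp only [Set.mem_inter_iff, Set.mem_sdiff]
          tauto

/-- Existence of a partition with prescribed measures independent
of finitely many given partitions. -/
theorem exists_indep_partition_of_prescribed_measures_family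
    {Ω : Type*} [MeasurableSpace Ω] (P : Measure Ω) [IsProbabilityMeasure P]
    (hD : Darboux P) (N : ℕ) (𝒜 : Fin N → Finset (Set Ω))
    (h𝒜 : ∀ i, IsFinPart (𝒜 i))
    (k : ℕ) (c : Fin k → ℝ) (hc0 : ∀ j, 0 ≤ c j) (hc1 : ∑ j, c j = 1) :
    ∃ C : Fin k → Set Ω, (∀ j, MeasurableSet (C j)) ∧
      (∀ i j, i ≠ j → Disjoint (C i) (C j)) ∧ (⋃ j, C j) = Set.univ ∧
      (∀ j, P (C j) = ENNReal.ofReal (c j)) ∧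
      ∀ j, ∀ i : Fin N, ∀ A ∈ 𝒜 i, P (C j ∩ A) = ENNReal.ofReal (c j) * P A := by
  classical
  -- With no pieces the weights could not sum to `1`.
  obtain _ | k := k
  · simp at hc1
  have hd : ∑ j, ENNReal.ofReal (c j) = 1 := by
    rw [← ENNReal.ofReal_sum_of_nonneg fun j _ => hc0 j, hc1, ENNReal.ofReal_one]
  obtain ⟨C, hCm, hCd, hCu, hCP, hCS⟩ := hD.exists_proportional_pieces
    (fun j => ENNReal.ofReal (c j)) hd (Finset.univ.biUnion 𝒜)
    (fun A hA => by
      obtain ⟨i, -, hi⟩ := Finset.mem_biUnion.1 hA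
      exact (h𝒜 i).1 A hi)
    Set.univ MeasurableSet.univ
  refine ⟨C, hCm, hCd, hCu, fun j => ?_, fun j i A hA => ?_⟩
  · rw [hCP, measure_univ, mul_one]
  · rw [hCS j A (Finset.mem_biUnion.2 ⟨i, Finset.mem_univ i, hA⟩), Set.univ_inter]

end APE
end

section
/- Let (Ω,Σ,P) be a probability space whose measure P has the Darboux property, and let λ>0. For any disjoint measurable sets V, W with P(V) ≤ ε(λ) and P(W) ≤ ε(λ), there exists a two-atom measurable partition {A₁,A₂} of Ω with V ⊆ A₁, W ⊆ A₂ and P(A₂)/P(A₁) = λ. -/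
/-! The first atom must have measure `θ = 1 / (1 + λ)`, so that its complement has measure
`1 - θ = 1 / (1 + λ⁻¹)` and the ratio is `λ`. The bounds on `V` and `W` say exactly that
`P V ≤ θ ≤ P Wᶜ`. Since `V ⊆ Wᶜ`, the Darboux property, applied to `Wᶜ \ V`, gives a set of
measure `θ` lying between `V` and `Wᶜ` (`Darboux.exists_between`); it and its complement are
the two atoms. -/

open MeasureTheory Filter Topology

namespace APE

variable {Ω : Type*} [MeasurableSpace Ω]

/-- The Darboux property in relative form, with real values and with both endpoints allowed. -/
theorem Darboux.exists_between {P : Measure Ω} [IsFiniteMeasure P] (hD : Darboux P)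
    {V U : Set Ω} (hV : MeasurableSet V) (hU : MeasurableSet U) (hVU : V ⊆ U) {θ : ℝ}
    (h₁ : P.real V ≤ θ) (h₂ : θ ≤ P.real U) :
    ∃ A : Set Ω, MeasurableSet A ∧ V ⊆ A ∧ A ⊆ U ∧ P.real A = θ := by
  rcases h₁.eq_or_lt with h₁ | h₁
  · exact ⟨V, hV, subset_rfl, hVU, h₁⟩
  rcases h₂.eq_or_lt with h₂ | h₂
  · exact ⟨U, hU, hVU, subset_rfl, h₂.symm⟩
  have hdiff : P.real (U \ V) = P.real U - P.real V := measureReal_sdiff hVU hV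
  obtain ⟨B, hB, hBU, hPB⟩ := hD (U \ V) (hU.diff hV) (ENNReal.ofReal (θ - P.real V))
    (ENNReal.ofReal_pos.2 (by linarith))
    (by
      rw [ENNReal.ofReal_lt_iff_lt_toReal (by linarith) (measure_ne_top _ _)]
      change _ < P.real (U \ V)
      linarith)
  have hPB' : P.real B = θ - P.real V := by
    rw [measureReal_def, hPB, ENNReal.toReal_ofReal (by linarith)]
  refine ⟨V ∪ B, hV.union hB, Set.subset_union_left,
    Set.union_subset hVU (hBU.trans Set.sdiff_subset), ?_⟩
  have hVB : Disjoint V B := Set.disjoint_sdiff_right.mono_right hBU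
  rw [measureReal_union hVB hB, hPB']
  ring

/-- Lemma `ε(λ)` A: existence of a two-atom partition with ratio
`λ` separating two small disjoint sets. -/
theorem exists_twoAtom_sep
    {Ω : Type*} [MeasurableSpace Ω] (P : Measure Ω) [IsProbabilityMeasure P]
    (hD : Darboux P) (lam : ℝ) (hlam : 0 < lam)
    (V W : Set Ω) (hV : MeasurableSet V) (hW : MeasurableSet W)
    (hdisj : Disjoint V W)
    (hPV : (P V).toReal ≤ epsFun lam) (hPW : (P W).toReal ≤ epsFun lam) :
    ∃ A₁ A₂ : Set Ω, MeasurableSet A₁ ∧ MeasurableSet A₂ ∧ A₁ ≠ ∅ ∧ A₂ ≠ ∅ ∧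
      Disjoint A₁ A₂ ∧ A₁ ∪ A₂ = Set.univ ∧ V ⊆ A₁ ∧ W ⊆ A₂ ∧
      (P A₂).toReal / (P A₁).toReal = lam := by
  have hθ : 0 < 1 / (1 + lam) := by positivity
  have hθ' : 1 / (1 + lam⁻¹) = 1 - 1 / (1 + lam) := by field_simp; ring
  have hV' : P.real V ≤ 1 / (1 + lam) := hPV.trans (min_le_left _ _)
  have hW' : P.real W ≤ 1 - 1 / (1 + lam) := hθ' ▸ hPW.trans (min_le_right _ _)
  obtain ⟨A, hA, hVA, hAW, hPA⟩ := hD.exists_between hV hW.compl hdisj.subset_compl_right hV'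
    (by rw [probReal_compl_eq_one_sub hW]; linarith)
  have hPAc : P.real Aᶜ = 1 / (1 + lam⁻¹) := by
    rw [probReal_compl_eq_one_sub hA, hPA, hθ']
  have hAc : 0 < P.real Aᶜ := by rw [hPAc]; positivity
  refine ⟨A, Aᶜ, hA, hA.compl, ?_, ?_, disjoint_compl_right, Set.union_compl_self A, hVA,
    Set.subset_compl_comm.1 hAW, ?_⟩
  · rintro rfl
    simp only [measureReal_empty] at hPA
    linarith
  · intro h
    simp [h] at hAc
  · change P.real Aᶜ / P.real A = lam
    rw [hPA, hPAc]
    field_simp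
    ring

end APE
end

section
/- Let (Ω,Σ,P) be a probability space whose measure P has the Darboux property, let λ>0 and κ>0. Let 𝒜 = {A₁,…,Aₙ} (n≥2) be a finite measurable partition with P(A₂)/P(A₁)=λ, and let V ⊆ A₁, W ⊆ A₂ be measurable sets with P(V) ≤ ε(κ)·ε(λ)·P(A₁∪A₂) and P(W) ≤ ε(κ)·ε(λ)·P(A₁∪A₂). Then there exists a two-atom measurable partition ℬ = {B₁,B₂} such that 𝒜 ⊥ ℬ, V ⊆ B₁, W ⊆ B₂ and P(B₂)/P(B₁) = κ. -/
/-!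
Put `p = 1 / (1 + κ)`, the measure that `B₁` must have. Independence from `𝒜` holds as soon as
`B₁` occupies the fraction `p` of every atom, so `B₁` can be assembled atom by atom as the union of
sets `S A ⊆ A` with `P (S A) = p * P A`, and `B₂` is its complement. The separation constraints
become `V ∩ A ⊆ S A ⊆ A \ W`, and the Darboux property produces a set of any prescribed measure
between two nested sets (`exists_between_of_darboux`). The smallness assumption is what leaves room
for this: `ε(λ) * P (A₁ ∪ A₂) ≤ min (P A₁) (P A₂)` and `ε(κ) ≤ min p (1 - p)`, whence
`P V ≤ p * P A₁` and `P W ≤ (1 - p) * P A₂`.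
-/

open MeasureTheory Filter Topology

namespace APE

variable {Ω : Type*} [MeasurableSpace Ω]

/-- Under the Darboux property, every value between the measures of two nested sets is attained by
an intermediate set. -/
theorem exists_between_of_darboux {Ω : Type*} [MeasurableSpace Ω] (P : Measure Ω)
    [IsProbabilityMeasure P] (hD : Darboux P) (L U : Set Ω) (hL : MeasurableSet L)
    (hU : MeasurableSet U) (hLU : L ⊆ U) (θ : ENNReal) (h1 : P L ≤ θ) (h2 : θ ≤ P U) :
    ∃ B, MeasurableSet B ∧ L ⊆ B ∧ B ⊆ U ∧ P B = θ := by
  -- The Darboux property only covers values strictly inside the range.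
  rcases h1.eq_or_lt with h1 | h1
  · exact ⟨L, hL, subset_rfl, hLU, h1⟩
  rcases h2.eq_or_lt with h2 | h2
  · exact ⟨U, hU, hLU, subset_rfl, h2.symm⟩
  have hd : P (U \ L) = P U - P L :=
    measure_sdiff hLU hL.nullMeasurableSet (measure_ne_top _ _)
  obtain ⟨C, hC, hCU, hPC⟩ := hD (U \ L) (hU.diff hL) (θ - P L) (tsub_pos_of_lt h1)
    (by rwa [hd, ENNReal.sub_lt_iff_lt_right (measure_ne_top _ _) h1.le,
      tsub_add_cancel_of_le (h1.trans h2).le])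
  refine ⟨L ∪ C, hL.union hC, Set.subset_union_left,
    Set.union_subset hLU (hCU.trans Set.sdiff_subset), ?_⟩
  rw [measure_union (Set.disjoint_left.2 fun x hx hxC => (hCU hxC).2 hx) hC, hPC]
  exact add_tsub_cancel_of_le h1.le

/-- `ε(λ)` is at most the smaller of the two relative shares of a pair of masses with ratio `λ`. -/
theorem epsFun_mul_le {a b : ℝ} (ha : 0 < a) (hb : 0 < b) :
    epsFun (b / a) * (a + b) ≤ a ∧ epsFun (b / a) * (a + b) ≤ b := by
  have hab : 0 ≤ a + b := by positivity
  constructor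
  · calc epsFun (b / a) * (a + b) ≤ 1 / (1 + b / a) * (a + b) :=
        mul_le_mul_of_nonneg_right (min_le_left _ _) hab
      _ = a := by field_simp
  · calc epsFun (b / a) * (a + b) ≤ 1 / (1 + (b / a)⁻¹) * (a + b) :=
        mul_le_mul_of_nonneg_right (min_le_right _ _) hab
      _ = b := by field_simp; ring

/-- If a set `B` occupies the same fraction `p` of every atom of a partition, then it has measure
`p`, and `{B, Bᶜ}` is independent of the partition. -/
theorem measure_eq_and_indep_of_fraction {Ω : Type*} [MeasurableSpace Ω] (P : Measure Ω)
    [IsProbabilityMeasure P] (𝒜 : Finset (Set Ω)) (h𝒜 : IsFinPart 𝒜) (B : Set Ω)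
    (hB : MeasurableSet B) (p : ENNReal) (h : ∀ A ∈ 𝒜, P (A ∩ B) = P A * p) :
    P B = p ∧ Indep P 𝒜 (pairPart B Bᶜ) := by
  obtain ⟨hm, -, hdisj, hcov⟩ := h𝒜
  have hcov' : (⋃ A ∈ 𝒜, A) = Set.univ := by
    rw [← hcov, Set.sUnion_eq_biUnion]; rfl
  have hone : ∑ A ∈ 𝒜, P A = 1 := by
    rw [← measure_biUnion_finset (f := fun A => A) hdisj hm, hcov', measure_univ]
  have hPB : P B = p := by
    calc P B = P (⋃ A ∈ 𝒜, A ∩ B) := by rw [← Set.iUnion₂_inter, hcov', Set.univ_inter]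
      _ = ∑ A ∈ 𝒜, P (A ∩ B) := measure_biUnion_finset
          (fun A hA A' hA' hne => (hdisj hA hA' hne).mono Set.inter_subset_left
            Set.inter_subset_left) fun A hA => (hm A hA).inter hB
      _ = p := by rw [Finset.sum_congr rfl h, ← Finset.sum_mul, hone, one_mul]
  refine ⟨hPB, fun A hA C hC => ?_⟩
  have hi : P (A ∩ B) = P A * P B := by rw [hPB]; exact h A hA
  simp only [pairPart, Finset.mem_insert, Finset.mem_singleton] at hC
  rcases hC with rfl | rfl
  · exact hi
  · rw [prob_compl_eq_one_sub hB, ENNReal.mul_sub fun _ _ => measure_ne_top _ _, mul_one, ← hi,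
      ← Set.sdiff_eq]
    exact ENNReal.eq_sub_of_add_eq (measure_ne_top _ _) (measure_sdiff_add_inter A hB)

/-- Lemma `ε(λ)` B: existence of an independent two-atom
partition with ratio `κ` separating small sets inside two given atoms. -/
theorem exists_indep_twoAtom_sep
    {Ω : Type*} [MeasurableSpace Ω] (P : Measure Ω) [IsProbabilityMeasure P]
    (hD : Darboux P) (lam kap : ℝ) (hlam : 0 < lam) (hkap : 0 < kap)
    (𝒜 : Finset (Set Ω)) (h𝒜 : IsFinPart 𝒜)
    (A₁ A₂ : Set Ω) (hA₁ : A₁ ∈ 𝒜) (hA₂ : A₂ ∈ 𝒜) (hA12 : A₁ ≠ A₂)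
    (hratio : (P A₂).toReal / (P A₁).toReal = lam)
    (V W : Set Ω) (hV : MeasurableSet V) (hW : MeasurableSet W)
    (hVA : V ⊆ A₁) (hWA : W ⊆ A₂)
    (hPV : (P V).toReal ≤ epsFun kap * epsFun lam * (P (A₁ ∪ A₂)).toReal)
    (hPW : (P W).toReal ≤ epsFun kap * epsFun lam * (P (A₁ ∪ A₂)).toReal) :
    ∃ B₁ B₂ : Set Ω, MeasurableSet B₁ ∧ MeasurableSet B₂ ∧ B₁ ≠ ∅ ∧ B₂ ≠ ∅ ∧
      Disjoint B₁ B₂ ∧ B₁ ∪ B₂ = Set.univ ∧ V ⊆ B₁ ∧ W ⊆ B₂ ∧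
      (P B₂).toReal / (P B₁).toReal = kap ∧
      Indep P 𝒜 (pairPart B₁ B₂) := by
  have hDisj : ∀ A ∈ 𝒜, ∀ C ∈ 𝒜, A ≠ C → Disjoint A C := fun A hA C hC hne =>
    h𝒜.2.2.1 hA hC hne
  -- A zero denominator or numerator would force the ratio `λ` to vanish.
  have ha : 0 < P.real A₁ := by
    refine measureReal_nonneg.lt_of_ne fun h => hlam.ne ?_
    rw [← hratio]; change 0 = _ / P.real A₁; rw [← h, div_zero]
  have hb : 0 < P.real A₂ := by
    refine measureReal_nonneg.lt_of_ne fun h => hlam.ne ?_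
    rw [← hratio]; change 0 = P.real A₂ / _; rw [← h, zero_div]
  have hU : (P (A₁ ∪ A₂)).toReal = P.real A₁ + P.real A₂ :=
    measureReal_union (hDisj _ hA₁ _ hA₂ hA12) (h𝒜.1 _ hA₂)
  obtain ⟨he1, he2⟩ := epsFun_mul_le ha hb
  rw [show P.real A₂ / P.real A₁ = lam from hratio] at he1 he2
  rw [hU, mul_assoc] at hPV hPW
  set q : ℝ := 1 / (1 + kap) with hq
  have hq0 : 0 < q := by positivity
  have hk1 : epsFun kap ≤ q := min_le_left _ _
  have hk2 : epsFun kap ≤ 1 - q := (min_le_right _ _).trans_eq (by rw [hq]; field_simp; ring)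
  have hk0 : 0 ≤ epsFun kap := le_min (by positivity) (by positivity)
  have hVq : P.real V ≤ q * P.real A₁ := hPV.trans
    ((mul_le_mul_of_nonneg_left he1 hk0).trans (mul_le_mul_of_nonneg_right hk1 ha.le))
  have hWq : P.real W ≤ (1 - q) * P.real A₂ := hPW.trans
    ((mul_le_mul_of_nonneg_left he2 hk0).trans (mul_le_mul_of_nonneg_right hk2 hb.le))
  have hq1 : q ≤ 1 := by rw [hq, div_le_one (by positivity)]; linarith
  have hprod : ∀ A : Set Ω, P A * ENNReal.ofReal q = ENNReal.ofReal (P.real A * q) := fun A => by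
    rw [ENNReal.ofReal_mul measureReal_nonneg, ofReal_measureReal]
  have hex : ∀ A ∈ 𝒜, ∃ B, MeasurableSet B ∧ V ∩ A ⊆ B ∧ B ⊆ A \ W ∧
      P B = P A * ENNReal.ofReal q := by
    intro A hA
    refine exists_between_of_darboux P hD _ _ (hV.inter (h𝒜.1 A hA)) ((h𝒜.1 A hA).diff hW)
      (fun x hx => ⟨hx.2, fun hxW =>
        Set.disjoint_left.1 (hDisj _ hA₁ _ hA₂ hA12) (hVA hx.1) (hWA hxW)⟩) _ ?_ ?_
    · rw [hprod, ← ofReal_measureReal]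
      apply ENNReal.ofReal_le_ofReal
      by_cases h : A = A₁
      · subst h
        rw [Set.inter_eq_left.2 hVA, mul_comm]
        exact hVq
      · rw [((hDisj _ hA₁ _ hA (Ne.symm h)).mono_left hVA).inter_eq, measureReal_empty]
        positivity
    · rw [hprod, ← ofReal_measureReal (s := A \ W)]
      apply ENNReal.ofReal_le_ofReal
      by_cases h : A = A₂
      · subst h
        rw [measureReal_sdiff hWA hW]
        linarith
      · rw [((hDisj _ hA _ hA₂ h).mono_right hWA).sdiff_eq_left]
        exact mul_le_of_le_one_right measureReal_nonneg hq1
  choose! S hSm hVS hSW hSP using hex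
  have hcover : ∀ x, ∃ A ∈ 𝒜, x ∈ A := fun x => by
    have hx : x ∈ ⋃₀ (𝒜 : Set (Set Ω)) := by rw [h𝒜.2.2.2]; trivial
    simpa using hx
  have hBm : MeasurableSet (⋃ A ∈ 𝒜, S A) := Finset.measurableSet_biUnion 𝒜 hSm
  have hinter : ∀ A ∈ 𝒜, A ∩ (⋃ A ∈ 𝒜, S A) = S A := by
    intro A hA
    ext x
    simp only [Set.mem_inter_iff, Set.mem_iUnion, exists_prop]
    constructor
    · rintro ⟨hx, A', hA', hx'⟩
      by_cases h : A = A'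
      · rwa [h]
      · exact absurd (hSW A' hA' hx').1 (Set.disjoint_left.1 (hDisj _ hA _ hA' h) hx)
    · exact fun hx => ⟨(hSW A hA hx).1, A, hA, hx⟩
  obtain ⟨hPB, hind⟩ := measure_eq_and_indep_of_fraction P 𝒜 h𝒜 _ hBm (ENNReal.ofReal q)
    fun A hA => by rw [hinter A hA, hSP A hA]
  set B := ⋃ A ∈ 𝒜, S A with hBdef
  have hB1 : P.real B = q := by rw [measureReal_def, hPB, ENNReal.toReal_ofReal hq0.le]
  have hB2 : P.real Bᶜ = 1 - q := probReal_compl_eq_one_sub hBm |>.trans (by rw [hB1])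
  have hrat : (1 - q) / q = kap := by rw [hq]; field_simp; ring
  have hq1' : 0 < 1 - q := by
    rw [(div_eq_iff hq0.ne').1 hrat]; positivity
  refine ⟨B, Bᶜ, hBm, hBm.compl, ?_, ?_, disjoint_compl_right, Set.union_compl_self _, ?_, ?_, ?_,
    hind⟩
  · intro h; rw [h, measureReal_empty] at hB1; exact hq0.ne hB1
  · intro h; rw [h, measureReal_empty] at hB2; exact hq1'.ne hB2
  · intro x hx
    exact Set.mem_biUnion hA₁ (hVS A₁ hA₁ ⟨hx, hVA hx⟩)
  · intro x hx hxB
    obtain ⟨A, hA, hxS⟩ := Set.mem_iUnion₂.1 hxB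
    exact (hSW A hA hxS).2 hx
  · change P.real Bᶜ / P.real B = kap
    rw [hB1, hB2, hrat]

end APE
end
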